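/- One-sided Lipschitz property of the damped collision operator: let N ≥ 0, ν > 0, M, M' > 0, and let V_M be a set of nonnegative functions in L¹(ℝ^d) ∩ L¹_{N+2}(ℝ^d) with L¹_{N+2}-norms bounded above by M and L¹-norms bounded below by M'. Define Q̃[f] = Q[f] − 2ν|k|²f. Then there exists a constant C_N > 0 such that for all f, g ∈ V_M, the bracket with respect to the L¹_N norm satisfies [Q̃[f] − Q̃[g], f − g] ≤ C_N ‖f − g‖_{L¹_N}, where [φ,ψ] := lim_{h→0⁻} h⁻¹(‖ψ + hφ‖_{L¹_N} − ‖ψ‖_{L¹_N}); in particular [φ,ψ] ≤ ∫_{ℝ^d} φ(k)·sign(ψ(k))·ω_k^N dk. -/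

import Mathlib

noncomputable section
open MeasureTheory Filter Set Real

abbrev Sp (d : ℕ) : Type := EuclideanSpace ℝ (Fin d)

/-- Dispersion relation ω_k = √(λ1 + λ2 |k|²). -/
def omg (l1 l2 : ℝ) {d : ℕ} (k : Sp d) : ℝ := Real.sqrt (l1 + l2 * ‖k‖ ^ 2)

/-- Zeroth moment 𝔐₀[f] = ∫ f. -/
def M0 {d : ℕ} (f : Sp d → ℝ) : ℝ := ∫ k, f k

/-- Resonance broadening Γ_{k,k1,k2}[f]. -/
def Gam {d : ℕ} (f : Sp d → ℝ) (k k1 k2 : Sp d) : ℝ :=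
  (‖k‖ ^ 2 + ‖k1‖ ^ 2 + ‖k2‖ ^ 2) * M0 f

/-- Lorentzian L_f(ζ; k,k1,k2) = Γ/(ζ² + Γ²). -/
def Lor {d : ℕ} (f : Sp d → ℝ) (z : ℝ) (k k1 k2 : Sp d) : ℝ :=
  Gam f k k1 k2 / (z ^ 2 + Gam f k k1 k2 ^ 2)

/-- Collision kernel |V_{k,k1,k2}|² = |k||k1||k2|. -/
def Vsq {d : ℕ} (k k1 k2 : Sp d) : ℝ := ‖k‖ * ‖k1‖ * ‖k2‖

/-- Collision operator Q[f] after eliminating the Dirac delta enforcing k = k1 + k2. -/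
def Qop (l1 l2 : ℝ) {d : ℕ} (f : Sp d → ℝ) (k : Sp d) : ℝ :=
  (∫ k1, Vsq k k1 (k - k1) *
      Lor f (omg l1 l2 k - omg l1 l2 k1 - omg l1 l2 (k - k1)) k k1 (k - k1) *
      (f k1 * f (k - k1) - f k * f k1 - f k * f (k - k1)))
  - 2 * ∫ k2, Vsq (k + k2) k k2 *
      Lor f (omg l1 l2 (k + k2) - omg l1 l2 k - omg l1 l2 k2) (k + k2) k k2 *
      (f k * f k2 - f k * f (k + k2) - f (k + k2) * f k2)

/-- Weighted L¹ norm ‖g‖_{L¹_N} = ∫ |g| ω^N. -/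
def wnorm (l1 l2 N : ℝ) {d : ℕ} (g : Sp d → ℝ) : ℝ := ∫ k, |g k| * omg l1 l2 k ^ N

/-- N-th moment 𝔐_N[g] = ∫ ω^N g. -/
def Mom (l1 l2 N : ℝ) {d : ℕ} (g : Sp d → ℝ) : ℝ := ∫ k, omg l1 l2 k ^ N * g k

/-- Damped collision operator Q̃[f] = Q[f] − 2ν|k|²f. -/
def Qt (l1 l2 ν : ℝ) {d : ℕ} (f : Sp d → ℝ) (k : Sp d) : ℝ :=
  Qop l1 l2 f k - 2 * ν * ‖k‖ ^ 2 * f k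

/-!
Parametrise the triads by their incoming members `(b, e)`, the outgoing one being `b + e`. Both
halves of `Q[f]` are then partial integrals of one function of `(b, e)`, the kernel
`|V|² L_f` times a quadratic combination of the values of `f` at pairs of members of the triad.
The broadening is proportional to the mass of `f`, so the kernel is at most `|x| / 𝔐₀[f]` for
*any* member `x` of the triad, and it depends on `f` only through `𝔐₀[f]`, in a Lipschitz way.
No member is longer than the sum of any two, so a product of values at members `x ≠ y` absorbs
the weight of every member `z`: `ω_z^N |y| ≲ ω_x^N ω_y^(N+2)`. The map `(b, e) ↦ (x, y)` preserves
the measure, so each product integrates to a product of moments, and `Q` is Lipschitz in `L¹_N` on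
`V_M`.

Convexity of the absolute value bounds the bracket by the integral against `sign (f - g)`. The
damping contributes `-2 ν |k|² (f - g) sign (f - g) ≤ 0` to it, and the rest is at most
`‖Q[f] - Q[g]‖_{L¹_N}`.
-/

section Bracket

open scoped Topology

variable {α : Type*} [MeasurableSpace α] {μ : Measure α} {φ ψ : α → ℝ}

lemma mul_mul_sign_le_abs_add_sub_abs (a b h : ℝ) : h * (b * Real.sign a) ≤ |a + h * b| - |a| := by
  rcases lt_trichotomy a 0 with ha | rfl | ha
  · rw [Real.sign_of_neg ha, abs_of_neg ha]
    linarith [neg_abs_le (a + h * b)]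
  · simpa using mul_nonneg (abs_nonneg h) (abs_nonneg b)
  · rw [Real.sign_of_pos ha, abs_of_pos ha]
    linarith [le_abs_self (a + h * b)]

lemma abs_mul_sign_le (a b : ℝ) : |b * Real.sign a| ≤ |b| := by
  rcases Real.sign_apply_eq a with h | h | h <;> simp [h]

-- Writes `φ * sign ψ` in terms of `|ψ + hφ|`, `|ψ|` and `|φ|`, which are measurable even where the
-- measurability of `φ` and `ψ` themselves is not known.
lemma mul_sign_eq_polarization {a b h : ℝ} (hh : h ≠ 0) :
    b * Real.sign a = (|a + h * b| ^ 2 - |a| ^ 2 - h ^ 2 * |b| ^ 2) / (2 * h) / |a| := by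
  simp only [sq_abs]
  rcases lt_trichotomy a 0 with ha | rfl | ha
  · rw [Real.sign_of_neg ha, abs_of_neg ha]
    field [ha.ne]
  · simp
  · rw [Real.sign_of_pos ha, abs_of_pos ha]
    field [ha.ne']

lemma integrable_mul_sign {h : ℝ} (hh : h ≠ 0) (hφ : Integrable (fun x => |φ x|) μ)
    (hψ : Integrable (fun x => |ψ x|) μ) (hadd : Integrable (fun x => |ψ x + h * φ x|) μ) :
    Integrable (fun x => φ x * Real.sign (ψ x)) μ := by
  have hmeas : AEMeasurable (fun x => φ x * Real.sign (ψ x)) μ := by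
    simp only [mul_sign_eq_polarization hh]
    exact ((((hadd.aemeasurable.pow_const 2).sub (hψ.aemeasurable.pow_const 2)).sub
      ((hφ.aemeasurable.pow_const 2).const_mul _)).div_const _).div hψ.aemeasurable
  refine hφ.mono hmeas.aestronglyMeasurable (.of_forall fun x => ?_)
  simpa only [Real.norm_eq_abs, abs_abs] using abs_mul_sign_le (ψ x) (φ x)

-- Where `ψ + hφ` fails to be integrable, its integral is the junk value `0`; unless `ψ = 0` almost
-- everywhere, the difference quotient then blows up as `h → 0⁻`.
lemma eventually_integrable_abs_add_mul {L : ℝ} (hφ : Integrable (fun x => |φ x|) μ)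
    (hψ : Integrable (fun x => |ψ x|) μ)
    (hL : Tendsto (fun h : ℝ => (∫ x, |ψ x + h * φ x| ∂μ - ∫ x, |ψ x| ∂μ) / h) (𝓝[<] 0) (𝓝 L)) :
    ∀ᶠ h : ℝ in 𝓝[<] 0, Integrable (fun x => |ψ x + h * φ x|) μ := by
  have hψ_nonneg : 0 ≤ ∫ x, |ψ x| ∂μ := integral_nonneg fun x => abs_nonneg _
  rcases hψ_nonneg.eq_or_lt with hψ_zero | hψ_pos
  · have hψ_ae : ∀ᵐ x ∂μ, |ψ x| = 0 :=
      (integral_eq_zero_iff_of_nonneg (fun x => abs_nonneg _) hψ).1 hψ_zero.symm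
    refine .of_forall fun h => (hφ.const_mul |h|).congr ?_
    filter_upwards [hψ_ae] with x hx
    rw [abs_eq_zero.1 hx, zero_add, abs_mul]
  · have hlt := hL.eventually_lt_const (show L < |L| + 1 by linarith [le_abs_self L])
    have hsmall : ∀ᶠ h : ℝ in 𝓝[<] 0, -(∫ x, |ψ x| ∂μ) < h * (|L| + 1) := by
      have : Tendsto (fun h : ℝ => h * (|L| + 1)) (𝓝[<] 0) (𝓝 0) := by
        simpa using ((continuous_mul_const (|L| + 1)).tendsto 0).mono_left nhdsWithin_le_nhds
      exact this.eventually_const_lt (neg_neg_of_pos hψ_pos)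
    filter_upwards [hlt, hsmall, self_mem_nhdsWithin] with h hquot hh_small hh_neg
    by_contra hni
    rw [integral_undef hni, zero_sub, div_lt_iff_of_neg hh_neg] at hquot
    linarith

lemma bracket_le_integral_mul_sign {L : ℝ} (hφ : Integrable (fun x => |φ x|) μ)
    (hψ : Integrable (fun x => |ψ x|) μ)
    (hL : Tendsto (fun h : ℝ => (∫ x, |ψ x + h * φ x| ∂μ - ∫ x, |ψ x| ∂μ) / h) (𝓝[<] 0) (𝓝 L)) :
    L ≤ ∫ x, φ x * Real.sign (ψ x) ∂μ := by
  refine le_of_tendsto hL ?_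
  filter_upwards [eventually_integrable_abs_add_mul hφ hψ hL, self_mem_nhdsWithin] with h hadd hh
  rw [div_le_iff_of_neg hh, ← integral_sub hadd hψ, mul_comm, ← integral_const_mul]
  exact integral_mono ((integrable_mul_sign hh.ne hφ hψ hadd).const_mul h) (hadd.sub hψ) fun x =>
    mul_mul_sign_le_abs_add_sub_abs (ψ x) (φ x) h

end Bracket

section MeasurePreserving

variable {α β γ : Type*} [MeasurableSpace α] [MeasurableSpace β] [MeasurableSpace γ]
  {μ : Measure α} {ν : Measure β} {ρ : Measure γ}

lemma integral_comp_of_measurePreserving {T : α → γ} {F : γ → ℝ} (hT : MeasurePreserving T μ ρ)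
    (hF : AEStronglyMeasurable F ρ) : ∫ x, F (T x) ∂μ = ∫ z, F z ∂ρ := by
  have hmap := integral_map hT.measurable.aemeasurable (hT.map_eq.symm ▸ hF)
  rw [← hmap, hT.map_eq]

lemma integral_abs_integral_comp_sub_le [SFinite μ] [SFinite ν] {T : α × β → γ} {F G : γ → ℝ}
    (hT : MeasurePreserving T (μ.prod ν) ρ) (hF : Integrable F ρ) (hG : Integrable G ρ) :
    ∫ x, |(∫ y, F (T (x, y)) ∂ν) - ∫ y, G (T (x, y)) ∂ν| ∂μ ≤ ∫ z, |F z - G z| ∂ρ := by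
  have hFT : Integrable (fun p => F (T p)) (μ.prod ν) := hT.integrable_comp_of_integrable hF
  have hGT : Integrable (fun p => G (T p)) (μ.prod ν) := hT.integrable_comp_of_integrable hG
  have habs : Integrable (fun p => |F (T p) - G (T p)|) (μ.prod ν) := (hFT.sub hGT).abs
  rw [← integral_comp_of_measurePreserving (F := fun z => |F z - G z|) hT
    (hF.sub hG).abs.aestronglyMeasurable]
  refine (integral_mono_ae (hFT.integral_prod_left.sub hGT.integral_prod_left).abs
    habs.integral_prod_left ?_).trans_eq (integral_prod _ habs).symm
  filter_upwards [hFT.prod_right_ae, hGT.prod_right_ae] with x hFx hGx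
  rw [Pi.sub_apply, ← integral_sub hFx hGx]
  exact abs_integral_le_integral_abs

end MeasurePreserving

section Triads

variable {α G ι : Type*}

/-- The triad `(k, k₁, k₂) = (b + e, b, e)` on which the interaction takes place, parametrised by
its two incoming members. -/
def triad [Add G] (b e : G) : Fin 3 → G := ![b + e, b, e]

/-- The sum of `u x * v y` over all ordered pairs `(x, y)` of distinct members of the family `t`. -/
def pairSum [Fintype ι] (u v : α → ℝ) (t : ι → α) : ℝ :=
  ∑ p ∈ Finset.univ.offDiag, u (t p.1) * v (t p.2)

lemma norm_triad_le_add [SeminormedAddCommGroup G] (b e : G) (i : Fin 3) {j l : Fin 3}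
    (hjl : j ≠ l) : ‖triad b e i‖ ≤ ‖triad b e j‖ + ‖triad b e l‖ := by
  have hsum : ‖b + e‖ ≤ ‖b‖ + ‖e‖ := norm_add_le b e
  have hleft : ‖b‖ ≤ ‖b + e‖ + ‖e‖ := by simpa using norm_sub_le (b + e) e
  have hright : ‖e‖ ≤ ‖b + e‖ + ‖b‖ := by simpa using norm_sub_le (b + e) b
  have := norm_nonneg b
  have := norm_nonneg e
  have := norm_nonneg (b + e)
  fin_cases i <;> fin_cases j <;> fin_cases l <;> first | exact absurd rfl hjl | skip
  all_goals
    simp only [triad, Fin.zero_eta, Fin.mk_one, Fin.reduceFinMk, Matrix.cons_val]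
    linarith

lemma pairSum_triad [Add G] (u v : G → ℝ) (b e : G) :
    pairSum u v (triad b e) = u (b + e) * v b + u (b + e) * v e + u b * v (b + e) + u b * v e
      + u e * v (b + e) + u e * v b := by
  have hpairs : (Finset.univ : Finset (Fin 3)).offDiag
      = {(0, 1), (0, 2), (1, 0), (1, 2), (2, 0), (2, 1)} := by decide
  simp [pairSum, hpairs, triad, ← add_assoc]

variable [AddCommGroup G] [MeasurableSpace G] [MeasurableAdd₂ G] (μ : Measure G) [SFinite μ]
  [μ.IsAddLeftInvariant]

lemma measurePreserving_triad {i j : Fin 3} (hij : i ≠ j) :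
    MeasurePreserving (fun p : G × G => (triad p.1 p.2 i, triad p.1 p.2 j))
      (μ.prod μ) (μ.prod μ) := by
  have h01 : MeasurePreserving (fun p : G × G => (p.1, p.1 + p.2)) (μ.prod μ) (μ.prod μ) :=
    measurePreserving_prod_add μ μ
  have h02 : MeasurePreserving (fun p : G × G => (p.1 + p.2, p.2)) (μ.prod μ) (μ.prod μ) :=
    measurePreserving_add_prod μ μ
  have hswap : MeasurePreserving (Prod.swap : G × G → G × G) (μ.prod μ) (μ.prod μ) :=
    Measure.measurePreserving_swap
  fin_cases i <;> fin_cases j <;> first | exact absurd rfl hij | skip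
  exacts [hswap.comp h01, h02, h01, .id _, hswap.comp h02, hswap]

lemma quasiMeasurePreserving_triad (i : Fin 3) :
    Measure.QuasiMeasurePreserving (fun p : G × G => triad p.1 p.2 i) (μ.prod μ) μ := by
  obtain ⟨j, hij⟩ := exists_ne i
  exact Measure.quasiMeasurePreserving_fst.comp
    (measurePreserving_triad μ hij.symm).quasiMeasurePreserving

variable {μ} {U V : G → ℝ}

lemma integrable_mul_triad (hU : Integrable U μ) (hV : Integrable V μ) {i j : Fin 3}
    (hij : i ≠ j) :
    Integrable (fun p : G × G => U (triad p.1 p.2 i) * V (triad p.1 p.2 j)) (μ.prod μ) :=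
  (measurePreserving_triad μ hij).integrable_comp_of_integrable (hU.mul_prod hV)

lemma integral_mul_triad (hU : Integrable U μ) (hV : Integrable V μ) {i j : Fin 3}
    (hij : i ≠ j) :
    ∫ p : G × G, U (triad p.1 p.2 i) * V (triad p.1 p.2 j) ∂(μ.prod μ)
      = (∫ x, U x ∂μ) * ∫ x, V x ∂μ := by
  rw [integral_comp_of_measurePreserving (F := fun q : G × G => U q.1 * V q.2)
    (measurePreserving_triad μ hij) (hU.mul_prod hV).aestronglyMeasurable, integral_prod_mul]

lemma integrable_pairSum_triad (hU : Integrable U μ) (hV : Integrable V μ) :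
    Integrable (fun p : G × G => pairSum U V (triad p.1 p.2)) (μ.prod μ) :=
  integrable_finsetSum _ fun _ hp => integrable_mul_triad hU hV (Finset.mem_offDiag.1 hp).2.2

lemma integral_pairSum_triad (hU : Integrable U μ) (hV : Integrable V μ) :
    ∫ p : G × G, pairSum U V (triad p.1 p.2) ∂(μ.prod μ)
      = 6 * ((∫ x, U x ∂μ) * ∫ x, V x ∂μ) := by
  have hoff {p : Fin 3 × Fin 3} (hp : p ∈ Finset.univ.offDiag) : p.1 ≠ p.2 :=
    (Finset.mem_offDiag.1 hp).2.2
  simp only [pairSum]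
  rw [integral_finsetSum _ fun p hp => integrable_mul_triad hU hV (hoff hp),
    Finset.sum_congr rfl fun p hp => integral_mul_triad hU hV (hoff hp)]
  simp [Finset.offDiag_card]

end Triads

section Weights

variable {d : ℕ} {l1 l2 N : ℝ}

/-- The constant for which `ω_z^N |y| ≤ weightConst · ω_x^N ω_y^(N+2)` whenever
`|z| ≤ |x| + |y|`. -/
def weightConst (l1 l2 N : ℝ) : ℝ := (2 / √l1) ^ N / (√l1 * √l2)

lemma weightConst_pos (hl1 : 0 < l1) (hl2 : 0 < l2) : 0 < weightConst l1 l2 N := by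
  unfold weightConst; positivity

lemma measurable_omg : Measurable (omg l1 l2 : Sp d → ℝ) := by
  unfold omg; fun_prop

lemma sqrt_le_omg (hl2 : 0 ≤ l2) (k : Sp d) : √l1 ≤ omg l1 l2 k :=
  Real.sqrt_le_sqrt (le_add_of_nonneg_right (by positivity))

lemma sqrt_mul_norm_le_omg (hl1 : 0 ≤ l1) (k : Sp d) : √l2 * ‖k‖ ≤ omg l1 l2 k := by
  rw [← Real.sqrt_sq (norm_nonneg k), ← Real.sqrt_mul' _ (sq_nonneg _)]
  exact Real.sqrt_le_sqrt (le_add_of_nonneg_left hl1)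

lemma omg_pos (hl1 : 0 < l1) (hl2 : 0 ≤ l2) (k : Sp d) : 0 < omg l1 l2 k :=
  (Real.sqrt_pos.2 hl1).trans_le (sqrt_le_omg hl2 k)

lemma rpow_omg_pos (hl1 : 0 < l1) (hl2 : 0 ≤ l2) (N : ℝ) (k : Sp d) : 0 < omg l1 l2 k ^ N :=
  Real.rpow_pos_of_pos (omg_pos hl1 hl2 k) N

lemma rpow_omg_add_two (hl1 : 0 < l1) (hl2 : 0 ≤ l2) (k : Sp d) :
    omg l1 l2 k ^ (N + 2) = omg l1 l2 k ^ N * omg l1 l2 k ^ 2 := by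
  rw [Real.rpow_add (omg_pos hl1 hl2 k), Real.rpow_two]

lemma one_le_rpow_omg_div (hl1 : 0 < l1) (hl2 : 0 ≤ l2) (hN : 0 ≤ N) (k : Sp d) :
    1 ≤ omg l1 l2 k ^ N / √l1 ^ N := by
  rw [one_le_div (by positivity)]
  exact Real.rpow_le_rpow (Real.sqrt_nonneg _) (sqrt_le_omg hl2 k) hN

lemma rpow_omg_le_rpow_omg_add_two (hl1 : 0 < l1) (hl2 : 0 ≤ l2) (k : Sp d) :
    omg l1 l2 k ^ N ≤ omg l1 l2 k ^ (N + 2) / l1 := by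
  have hsq : l1 ≤ omg l1 l2 k ^ 2 :=
    calc l1 = √l1 ^ 2 := (Real.sq_sqrt hl1.le).symm
      _ ≤ omg l1 l2 k ^ 2 := pow_le_pow_left₀ (Real.sqrt_nonneg _) (sqrt_le_omg hl2 k) 2
  rw [le_div_iff₀ hl1, rpow_omg_add_two hl1 hl2]
  exact mul_le_mul_of_nonneg_left hsq (rpow_omg_pos hl1 hl2 N k).le

lemma norm_sq_mul_rpow_omg_le (hl1 : 0 < l1) (hl2 : 0 < l2) (k : Sp d) :
    ‖k‖ ^ 2 * omg l1 l2 k ^ N ≤ omg l1 l2 k ^ (N + 2) / l2 := by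
  have hsq : ‖k‖ ^ 2 * l2 ≤ omg l1 l2 k ^ 2 :=
    calc ‖k‖ ^ 2 * l2 = (√l2 * ‖k‖) ^ 2 := by rw [mul_pow, Real.sq_sqrt hl2.le, mul_comm]
      _ ≤ omg l1 l2 k ^ 2 := pow_le_pow_left₀ (by positivity) (sqrt_mul_norm_le_omg hl1.le k) 2
  rw [le_div_iff₀ hl2, rpow_omg_add_two hl1 hl2.le, mul_right_comm, mul_comm]
  exact mul_le_mul_of_nonneg_left hsq (rpow_omg_pos hl1 hl2.le N k).le

lemma norm_le_omg_sq_div (hl1 : 0 < l1) (hl2 : 0 < l2) (k : Sp d) :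
    ‖k‖ ≤ omg l1 l2 k ^ 2 / (√l1 * √l2) := by
  rw [le_div_iff₀ (by positivity)]
  calc ‖k‖ * (√l1 * √l2) = √l1 * (√l2 * ‖k‖) := by ring
    _ ≤ omg l1 l2 k * omg l1 l2 k :=
      mul_le_mul (sqrt_le_omg hl2.le k) (sqrt_mul_norm_le_omg hl1.le k) (by positivity)
        (omg_pos hl1 hl2.le k).le
    _ = omg l1 l2 k ^ 2 := (sq _).symm

lemma omg_le_mul (hl1 : 0 < l1) (hl2 : 0 ≤ l2) {x y z : Sp d} (h : ‖z‖ ≤ ‖x‖ + ‖y‖) :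
    omg l1 l2 z ≤ 2 / √l1 * (omg l1 l2 x * omg l1 l2 y) := by
  have hz : ‖z‖ ^ 2 ≤ 2 * (‖x‖ ^ 2 + ‖y‖ ^ 2) :=
    (pow_le_pow_left₀ (norm_nonneg z) h 2).trans add_sq_le
  have hsq : l1 * (l1 + l2 * ‖z‖ ^ 2) ≤ 2 ^ 2 * ((l1 + l2 * ‖x‖ ^ 2) * (l1 + l2 * ‖y‖ ^ 2)) :=
    calc l1 * (l1 + l2 * ‖z‖ ^ 2) ≤ l1 * (l1 + l2 * (2 * (‖x‖ ^ 2 + ‖y‖ ^ 2))) := by gcongr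
      _ ≤ l1 * (l1 + l2 * (2 * (‖x‖ ^ 2 + ‖y‖ ^ 2)))
          + (3 * l1 ^ 2 + 2 * l1 * (l2 * (‖x‖ ^ 2 + ‖y‖ ^ 2))
            + 4 * (l2 * ‖x‖ ^ 2) * (l2 * ‖y‖ ^ 2)) := le_add_of_nonneg_right (by positivity)
      _ = 2 ^ 2 * ((l1 + l2 * ‖x‖ ^ 2) * (l1 + l2 * ‖y‖ ^ 2)) := by ring
  rw [div_mul_eq_mul_div, le_div_iff₀ (by positivity), mul_comm]
  simpa only [omg, Real.sqrt_mul hl1.le, Real.sqrt_mul (sq_nonneg (2 : ℝ)),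
    Real.sqrt_mul (show 0 ≤ l1 + l2 * ‖x‖ ^ 2 by positivity), Real.sqrt_sq zero_le_two]
    using Real.sqrt_le_sqrt hsq

lemma rpow_omg_mul_norm_le (hl1 : 0 < l1) (hl2 : 0 < l2) (hN : 0 ≤ N) {x y z : Sp d}
    (h : ‖z‖ ≤ ‖x‖ + ‖y‖) :
    omg l1 l2 z ^ N * ‖y‖ ≤ weightConst l1 l2 N * (omg l1 l2 x ^ N * omg l1 l2 y ^ (N + 2)) := by
  have hx := (omg_pos hl1 hl2.le x).le
  have hy := (omg_pos hl1 hl2.le y).le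
  have hrpow : omg l1 l2 z ^ N ≤ (2 / √l1) ^ N * (omg l1 l2 x ^ N * omg l1 l2 y ^ N) := by
    rw [← Real.mul_rpow hx hy, ← Real.mul_rpow (by positivity) (mul_nonneg hx hy)]
    exact Real.rpow_le_rpow (omg_pos hl1 hl2.le z).le (omg_le_mul hl1 hl2.le h) hN
  calc omg l1 l2 z ^ N * ‖y‖
      ≤ ((2 / √l1) ^ N * (omg l1 l2 x ^ N * omg l1 l2 y ^ N))
          * (omg l1 l2 y ^ 2 / (√l1 * √l2)) := by
        gcongr
        exact norm_le_omg_sq_div hl1 hl2 y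
    _ = weightConst l1 l2 N * (omg l1 l2 x ^ N * omg l1 l2 y ^ (N + 2)) := by
        rw [weightConst, rpow_omg_add_two hl1 hl2.le]; ring

lemma rpow_omg_mul_pairSum_le (hl1 : 0 < l1) (hl2 : 0 < l2) (hN : 0 ≤ N) {u v : Sp d → ℝ}
    (hu : ∀ k, 0 ≤ u k) (hv : ∀ k, 0 ≤ v k) {κ A : ℝ} (hA : 0 ≤ A) {b e : Sp d}
    (hκ : ∀ j, κ ≤ ‖triad b e j‖ * A) (i : Fin 3) :
    omg l1 l2 (triad b e i) ^ N * (κ * pairSum u v (triad b e)) ≤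
      weightConst l1 l2 N * A *
        pairSum (fun k => u k * omg l1 l2 k ^ N) (fun k => v k * omg l1 l2 k ^ (N + 2))
          (triad b e) := by
  rw [pairSum, pairSum, Finset.mul_sum, Finset.mul_sum, Finset.mul_sum]
  refine Finset.sum_le_sum fun p hp => ?_
  have hweight := rpow_omg_mul_norm_le hl1 hl2 hN
    (norm_triad_le_add b e i (Finset.mem_offDiag.1 hp).2.2)
  set x := triad b e p.1
  set y := triad b e p.2
  have hω := (rpow_omg_pos hl1 hl2.le N (triad b e i)).le
  calc omg l1 l2 (triad b e i) ^ N * (κ * (u x * v y))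
      ≤ omg l1 l2 (triad b e i) ^ N * (‖y‖ * A * (u x * v y)) := by
        gcongr
        · exact mul_nonneg (hu x) (hv y)
        · exact hκ p.2
    _ = omg l1 l2 (triad b e i) ^ N * ‖y‖ * (A * (u x * v y)) := by ring
    _ ≤ weightConst l1 l2 N * (omg l1 l2 x ^ N * omg l1 l2 y ^ (N + 2)) * (A * (u x * v y)) := by
        gcongr
        exact mul_nonneg hA (mul_nonneg (hu x) (hv y))
    _ = weightConst l1 l2 N * A * (u x * omg l1 l2 x ^ N * (v y * omg l1 l2 y ^ (N + 2))) := by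
        ring

end Weights

section Lorentzian

variable {S m n : ℝ}

lemma mul_lorentzian_le (hS : 0 ≤ S) (hm : 0 < m) (z : ℝ) :
    S * (S * m / (z ^ 2 + (S * m) ^ 2)) ≤ 1 / m := by
  rcases hS.eq_or_lt with rfl | hS
  · simpa using hm.le
  · rw [← mul_div_assoc, div_le_div_iff₀ (by positivity) hm]
    linarith [sq_nonneg z]

lemma mul_abs_lorentzian_sub_le (hS : 0 ≤ S) (hm : 0 < m) (hn : 0 < n) (z : ℝ) :
    S * |S * m / (z ^ 2 + (S * m) ^ 2) - S * n / (z ^ 2 + (S * n) ^ 2)| ≤ |m - n| / (m * n) := by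
  rcases hS.eq_or_lt with rfl | hS
  · simpa using by positivity
  have hsub : S * m / (z ^ 2 + (S * m) ^ 2) - S * n / (z ^ 2 + (S * n) ^ 2)
      = (m - n) * (S * (z ^ 2 - S * m * (S * n)))
        / ((z ^ 2 + (S * m) ^ 2) * (z ^ 2 + (S * n) ^ 2)) := by
    field
  have hnum : |z ^ 2 - S * m * (S * n)| ≤ z ^ 2 + S * m * (S * n) :=
    (abs_sub _ _).trans_eq (by rw [abs_of_nonneg (sq_nonneg z), abs_of_nonneg (by positivity)])
  have hden : S ^ 2 * (z ^ 2 + S * m * (S * n)) * (m * n)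
      ≤ (z ^ 2 + (S * m) ^ 2) * (z ^ 2 + (S * n) ^ 2) := by
    have : 0 ≤ z ^ 4 + z ^ 2 * S ^ 2 * ((m - n) ^ 2 + m * n) := by positivity
    linarith
  rw [hsub, abs_div, abs_mul, abs_mul, abs_of_pos hS,
    abs_of_pos (show 0 < (z ^ 2 + (S * m) ^ 2) * (z ^ 2 + (S * n) ^ 2) by positivity),
    ← mul_div_assoc, div_le_div_iff₀ (by positivity) (by positivity)]
  calc S * (|m - n| * (S * |z ^ 2 - S * m * (S * n)|)) * (m * n)
      ≤ S * (|m - n| * (S * (z ^ 2 + S * m * (S * n)))) * (m * n) := by gcongr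
    _ = |m - n| * (S ^ 2 * (z ^ 2 + S * m * (S * n)) * (m * n)) := by ring
    _ ≤ |m - n| * ((z ^ 2 + (S * m) ^ 2) * (z ^ 2 + (S * n) ^ 2)) := by gcongr

end Lorentzian

section Rate

variable {d : ℕ} {l1 l2 : ℝ} {f g : Sp d → ℝ}

/-- The kernel `|V|² L_f` evaluated on the triad `(b + e, b, e)`. -/
def triadKernel (l1 l2 : ℝ) (f : Sp d → ℝ) (b e : Sp d) : ℝ :=
  Vsq (b + e) b e * Lor f (omg l1 l2 (b + e) - omg l1 l2 b - omg l1 l2 e) (b + e) b e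

/-- The quadratic combination `f₁ f₂ - f f₁ - f f₂` of the values of `f` on the triad
`(b + e, b, e)`. -/
def triadBalance (f : Sp d → ℝ) (b e : Sp d) : ℝ :=
  f b * f e - f (b + e) * f b - f (b + e) * f e

/-- The integrand of both halves of the collision operator, as a function of the triad
`(b + e, b, e)`. -/
def triadRate (l1 l2 : ℝ) (f : Sp d → ℝ) (b e : Sp d) : ℝ :=
  triadKernel l1 l2 f b e * triadBalance f b e

lemma Vsq_le_norm_mul_sum_sq (b e : Sp d) (j : Fin 3) :
    Vsq (b + e) b e ≤ ‖triad b e j‖ * (‖b + e‖ ^ 2 + ‖b‖ ^ 2 + ‖e‖ ^ 2) := by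
  have hmul (x y z : ℝ) : x * y ≤ x ^ 2 + y ^ 2 + z ^ 2 := by
    linarith [sq_nonneg (x - y), sq_nonneg (x + y), sq_nonneg z]
  fin_cases j
  · calc ‖b + e‖ * ‖b‖ * ‖e‖ = ‖b + e‖ * (‖b‖ * ‖e‖) := by ring
      _ ≤ ‖b + e‖ * (‖b‖ ^ 2 + ‖e‖ ^ 2 + ‖b + e‖ ^ 2) := by gcongr; exact hmul _ _ _
      _ = ‖b + e‖ * (‖b + e‖ ^ 2 + ‖b‖ ^ 2 + ‖e‖ ^ 2) := by ring
  · calc ‖b + e‖ * ‖b‖ * ‖e‖ = ‖b‖ * (‖b + e‖ * ‖e‖) := by ring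
      _ ≤ ‖b‖ * (‖b + e‖ ^ 2 + ‖e‖ ^ 2 + ‖b‖ ^ 2) := by gcongr; exact hmul _ _ _
      _ = ‖b‖ * (‖b + e‖ ^ 2 + ‖b‖ ^ 2 + ‖e‖ ^ 2) := by ring
  · calc ‖b + e‖ * ‖b‖ * ‖e‖ = ‖e‖ * (‖b + e‖ * ‖b‖) := by ring
      _ ≤ ‖e‖ * (‖b + e‖ ^ 2 + ‖b‖ ^ 2 + ‖e‖ ^ 2) := by gcongr; exact hmul _ _ _

lemma triadKernel_nonneg (hf : 0 ≤ M0 f) (b e : Sp d) : 0 ≤ triadKernel l1 l2 f b e := by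
  unfold triadKernel Vsq Lor Gam; positivity

lemma triadKernel_le (hf : 0 < M0 f) (b e : Sp d) (j : Fin 3) :
    triadKernel l1 l2 f b e ≤ ‖triad b e j‖ * (1 / M0 f) := by
  have hLor : 0 ≤ Lor f (omg l1 l2 (b + e) - omg l1 l2 b - omg l1 l2 e) (b + e) b e := by
    unfold Lor Gam; positivity
  refine (mul_le_mul_of_nonneg_right (Vsq_le_norm_mul_sum_sq b e j) hLor).trans ?_
  rw [mul_assoc]
  exact mul_le_mul_of_nonneg_left (mul_lorentzian_le (by positivity) hf _) (norm_nonneg _)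

lemma abs_triadKernel_sub_le (hf : 0 < M0 f) (hg : 0 < M0 g) (b e : Sp d) (j : Fin 3) :
    |triadKernel l1 l2 f b e - triadKernel l1 l2 g b e|
      ≤ ‖triad b e j‖ * (|M0 f - M0 g| / (M0 f * M0 g)) := by
  have hVsq : 0 ≤ Vsq (b + e) b e := by unfold Vsq; positivity
  rw [triadKernel, triadKernel, ← mul_sub, abs_mul, abs_of_nonneg hVsq]
  refine (mul_le_mul_of_nonneg_right (Vsq_le_norm_mul_sum_sq b e j) (abs_nonneg _)).trans ?_
  rw [mul_assoc]
  exact mul_le_mul_of_nonneg_left (mul_abs_lorentzian_sub_le (by positivity) hf hg _)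
    (norm_nonneg _)

lemma abs_triadBalance_le (f : Sp d → ℝ) (b e : Sp d) :
    |triadBalance f b e| ≤ pairSum (fun k => |f k|) (fun k => |f k|) (triad b e) := by
  have hb := abs_nonneg (f b)
  have he := abs_nonneg (f e)
  have hbe := abs_nonneg (f (b + e))
  calc |triadBalance f b e| ≤ |f b * f e| + |f (b + e) * f b| + |f (b + e) * f e| :=
        (abs_sub _ _).trans (by gcongr; exact abs_sub _ _)
    _ = |f b| * |f e| + |f (b + e)| * |f b| + |f (b + e)| * |f e| := by simp only [abs_mul]
    _ ≤ pairSum (fun k => |f k|) (fun k => |f k|) (triad b e) := by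
        rw [pairSum_triad]
        linarith [mul_nonneg hb he, mul_nonneg hbe hb, mul_nonneg hbe he]

lemma abs_mul_sub_mul_le (a b c d : ℝ) : |a * b - c * d| ≤ |a - c| * |b| + |b - d| * |c| :=
  calc |a * b - c * d| = |(a - c) * b + (b - d) * c| := by ring_nf
    _ ≤ |a - c| * |b| + |b - d| * |c| := by
        simpa only [abs_mul] using abs_add_le ((a - c) * b) ((b - d) * c)

lemma abs_triadBalance_sub_le (f g : Sp d → ℝ) (b e : Sp d) :
    |triadBalance f b e - triadBalance g b e|
      ≤ pairSum (fun k => |f k - g k|) (fun k => |f k| + |g k|) (triad b e) := by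
  have hmul (x y : Sp d) : |f x * f y - g x * g y|
      ≤ |f x - g x| * (|f y| + |g y|) + |f y - g y| * (|f x| + |g x|) :=
    (abs_mul_sub_mul_le _ _ _ _).trans (by gcongr <;> simp)
  calc |triadBalance f b e - triadBalance g b e|
      = |(f b * f e - g b * g e) - (f (b + e) * f b - g (b + e) * g b)
          - (f (b + e) * f e - g (b + e) * g e)| := by
        unfold triadBalance; ring_nf
    _ ≤ |f b * f e - g b * g e| + |f (b + e) * f b - g (b + e) * g b|
          + |f (b + e) * f e - g (b + e) * g e| :=
        (abs_sub _ _).trans (by gcongr; exact abs_sub _ _)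
    _ ≤ pairSum (fun k => |f k - g k|) (fun k => |f k| + |g k|) (triad b e) := by
        rw [pairSum_triad]
        linarith [hmul b e, hmul (b + e) b, hmul (b + e) e]

end Rate

section Moments

variable {d : ℕ} {l1 l2 N : ℝ} {f g : Sp d → ℝ}

lemma integrable_mul_rpow_omg (hl1 : 0 < l1) (hl2 : 0 < l2) (hf : Integrable f)
    (hfN : Integrable fun k => |f k| * omg l1 l2 k ^ (N + 2)) :
    Integrable fun k => f k * omg l1 l2 k ^ N := by
  refine (hfN.div_const l1).mono'
    (hf.aestronglyMeasurable.mul (measurable_omg.pow_const N).aestronglyMeasurable)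
    (.of_forall fun k => ?_)
  rw [norm_mul, Real.norm_eq_abs, Real.norm_of_nonneg (rpow_omg_pos hl1 hl2.le N k).le,
    mul_div_assoc]
  gcongr
  exact rpow_omg_le_rpow_omg_add_two hl1 hl2.le k

lemma abs_mul_rpow_omg (hl1 : 0 < l1) (hl2 : 0 ≤ l2) (N a : ℝ) (k : Sp d) :
    |a * omg l1 l2 k ^ N| = |a| * omg l1 l2 k ^ N := by
  rw [abs_mul, abs_of_pos (rpow_omg_pos hl1 hl2 N k)]

lemma integrable_abs_mul_rpow_omg (hl1 : 0 < l1) (hl2 : 0 < l2) (hf : Integrable f)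
    (hfN : Integrable fun k => |f k| * omg l1 l2 k ^ (N + 2)) :
    Integrable fun k => |f k| * omg l1 l2 k ^ N := by
  simpa only [abs_mul_rpow_omg hl1 hl2.le] using (integrable_mul_rpow_omg hl1 hl2 hf hfN).abs

lemma integrable_norm_sq_mul_rpow_omg (hl1 : 0 < l1) (hl2 : 0 < l2) (hf : Integrable f)
    (hfN : Integrable fun k => |f k| * omg l1 l2 k ^ (N + 2)) :
    Integrable fun k => f k * (‖k‖ ^ 2 * omg l1 l2 k ^ N) := by
  refine (hfN.div_const l2).mono' (hf.aestronglyMeasurable.mul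
    ((measurable_norm.pow_const 2).mul (measurable_omg.pow_const N)).aestronglyMeasurable)
    (.of_forall fun k => ?_)
  have hω := (rpow_omg_pos hl1 hl2.le N k).le
  rw [norm_mul, Real.norm_eq_abs, Real.norm_of_nonneg (by positivity), mul_div_assoc]
  gcongr
  exact norm_sq_mul_rpow_omg_le hl1 hl2 k

lemma wnorm_nonneg (hl1 : 0 < l1) (hl2 : 0 ≤ l2) (f : Sp d → ℝ) : 0 ≤ wnorm l1 l2 N f :=
  integral_nonneg fun k => mul_nonneg (abs_nonneg _) (rpow_omg_pos hl1 hl2 N k).le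

lemma integrable_abs_sub_mul_rpow_omg (hl1 : 0 < l1) (hl2 : 0 ≤ l2) (hf : Integrable f)
    (hg : Integrable g) (hfN : Integrable fun k => |f k| * omg l1 l2 k ^ N)
    (hgN : Integrable fun k => |g k| * omg l1 l2 k ^ N) :
    Integrable fun k => |f k - g k| * omg l1 l2 k ^ N := by
  refine (hfN.add hgN).mono' ((hf.sub hg).abs.aestronglyMeasurable.mul
    (measurable_omg.pow_const N).aestronglyMeasurable) (.of_forall fun k => ?_)
  have hω := (rpow_omg_pos hl1 hl2 N k).le
  rw [Real.norm_of_nonneg (by positivity), Pi.add_apply, ← add_mul]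
  gcongr
  exact abs_sub _ _

lemma wnorm_le_wnorm_add_two_div (hl1 : 0 < l1) (hl2 : 0 < l2) (hf : Integrable f)
    (hfN : Integrable fun k => |f k| * omg l1 l2 k ^ (N + 2)) :
    wnorm l1 l2 N f ≤ wnorm l1 l2 (N + 2) f / l1 := by
  rw [wnorm, wnorm, ← integral_div]
  refine integral_mono (integrable_abs_mul_rpow_omg hl1 hl2 hf hfN) (hfN.div_const l1) fun k => ?_
  simp only [mul_div_assoc]
  gcongr
  exact rpow_omg_le_rpow_omg_add_two hl1 hl2.le k

lemma abs_M0_sub_le (hl1 : 0 < l1) (hl2 : 0 ≤ l2) (hN : 0 ≤ N) (hf : Integrable f)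
    (hg : Integrable g) (hfg : Integrable fun k => |f k - g k| * omg l1 l2 k ^ N) :
    |M0 f - M0 g| ≤ wnorm l1 l2 N (fun k => f k - g k) / √l1 ^ N := by
  rw [M0, M0, ← integral_sub hf hg, wnorm, ← integral_div]
  refine abs_integral_le_integral_abs.trans
    (integral_mono (hf.sub hg).abs (hfg.div_const _) fun k => ?_)
  simp only [mul_div_assoc]
  exact le_mul_of_one_le_right (abs_nonneg _) (one_le_rpow_omg_div hl1 hl2 hN k)

end Moments

section WeightedRate

variable {d : ℕ} {l1 l2 N : ℝ} {f g : Sp d → ℝ}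

/-- The contribution of the triad `(p.1 + p.2, p.1, p.2)` to the `L¹_N` density of the collision
operator at the `i`-th member of that triad. -/
def weightedRate (l1 l2 N : ℝ) (i : Fin 3) (f : Sp d → ℝ) (p : Sp d × Sp d) : ℝ :=
  omg l1 l2 (triad p.1 p.2 i) ^ N * triadRate l1 l2 f p.1 p.2

lemma abs_weightedRate_le (hl1 : 0 < l1) (hl2 : 0 < l2) (hN : 0 ≤ N) (hf : 0 < M0 f)
    (i : Fin 3) (p : Sp d × Sp d) :
    |weightedRate l1 l2 N i f p| ≤ weightConst l1 l2 N * (1 / M0 f) *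
      pairSum (fun k => |f k| * omg l1 l2 k ^ N) (fun k => |f k| * omg l1 l2 k ^ (N + 2))
        (triad p.1 p.2) := by
  have hω := (rpow_omg_pos hl1 hl2.le N (triad p.1 p.2 i)).le
  have hκ : 0 ≤ triadKernel l1 l2 f p.1 p.2 := triadKernel_nonneg hf.le _ _
  rw [weightedRate, triadRate, abs_mul, abs_mul, abs_of_nonneg hω, abs_of_nonneg hκ]
  refine le_trans ?_ (rpow_omg_mul_pairSum_le hl1 hl2 hN (fun k => abs_nonneg _)
    (fun k => abs_nonneg _) (by positivity) (triadKernel_le (l1 := l1) (l2 := l2) hf p.1 p.2) i)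
  gcongr
  exact abs_triadBalance_le _ _ _

lemma abs_weightedRate_sub_le (hl1 : 0 < l1) (hl2 : 0 < l2) (hN : 0 ≤ N) (hf : 0 < M0 f)
    (hg : 0 < M0 g) (i : Fin 3) (p : Sp d × Sp d) :
    |weightedRate l1 l2 N i f p - weightedRate l1 l2 N i g p| ≤
      weightConst l1 l2 N * (|M0 f - M0 g| / (M0 f * M0 g)) *
        pairSum (fun k => |f k| * omg l1 l2 k ^ N) (fun k => |f k| * omg l1 l2 k ^ (N + 2))
          (triad p.1 p.2)
      + weightConst l1 l2 N * (1 / M0 g) *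
        pairSum (fun k => |f k - g k| * omg l1 l2 k ^ N)
          (fun k => (|f k| + |g k|) * omg l1 l2 k ^ (N + 2)) (triad p.1 p.2) := by
  have hω := (rpow_omg_pos hl1 hl2.le N (triad p.1 p.2 i)).le
  have hκ : 0 ≤ triadKernel l1 l2 g p.1 p.2 := triadKernel_nonneg hg.le _ _
  have hkernel := rpow_omg_mul_pairSum_le hl1 hl2 hN (fun k => abs_nonneg (f k))
    (fun k => abs_nonneg (f k)) (by positivity)
    (abs_triadKernel_sub_le (l1 := l1) (l2 := l2) hf hg p.1 p.2) i
  have hbalance := rpow_omg_mul_pairSum_le hl1 hl2 hN (fun k => abs_nonneg (f k - g k))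
    (fun k => add_nonneg (abs_nonneg (f k)) (abs_nonneg (g k))) (by positivity)
    (triadKernel_le (l1 := l1) (l2 := l2) hg p.1 p.2) i
  rw [weightedRate, weightedRate, ← mul_sub, abs_mul, abs_of_nonneg hω]
  refine le_trans ?_ (add_le_add hkernel hbalance)
  rw [← mul_add, triadRate, triadRate]
  gcongr
  refine (abs_mul_sub_mul_le _ _ _ _).trans ?_
  rw [abs_of_nonneg hκ, mul_comm |triadBalance f _ _ - _|]
  gcongr
  · exact abs_triadBalance_le _ _ _
  · exact abs_triadBalance_sub_le _ _ _ _

lemma aestronglyMeasurable_weightedRate (hf : AEStronglyMeasurable f) (i : Fin 3) :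
    AEStronglyMeasurable (weightedRate l1 l2 N i f) (volume.prod volume) := by
  have hval (j : Fin 3) : AEMeasurable (fun p : Sp d × Sp d => f (triad p.1 p.2 j))
      (volume.prod volume) :=
    (hf.comp_quasiMeasurePreserving (quasiMeasurePreserving_triad volume j)).aemeasurable
  have hweight : Measurable fun p : Sp d × Sp d => omg l1 l2 (triad p.1 p.2 i) ^ N :=
    (measurable_omg.comp (quasiMeasurePreserving_triad volume i).measurable).pow_const N
  have hkernel : Measurable fun p : Sp d × Sp d => triadKernel l1 l2 f p.1 p.2 := by
    unfold triadKernel Vsq Lor Gam omg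
    fun_prop
  exact (hweight.aemeasurable.mul (hkernel.aemeasurable.mul ((((hval 1).mul (hval 2)).sub
    ((hval 0).mul (hval 1))).sub ((hval 0).mul (hval 2))))).aestronglyMeasurable

lemma integrable_weightedRate (hl1 : 0 < l1) (hl2 : 0 < l2) (hN : 0 ≤ N) (hf_pos : 0 < M0 f)
    (hf : Integrable f) (hfN : Integrable fun k => |f k| * omg l1 l2 k ^ (N + 2)) (i : Fin 3) :
    Integrable (weightedRate l1 l2 N i f) (volume.prod volume) := by
  have hf_low := integrable_abs_mul_rpow_omg hl1 hl2 hf hfN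
  exact ((integrable_pairSum_triad hf_low hfN).const_mul _).mono'
    (aestronglyMeasurable_weightedRate hf.aestronglyMeasurable i)
    (.of_forall (abs_weightedRate_le hl1 hl2 hN hf_pos i))

lemma integral_abs_weightedRate_sub_le (hl1 : 0 < l1) (hl2 : 0 < l2) (hN : 0 ≤ N)
    (hf_pos : 0 < M0 f) (hg_pos : 0 < M0 g) (hf : Integrable f) (hg : Integrable g)
    (hfN : Integrable fun k => |f k| * omg l1 l2 k ^ (N + 2))
    (hgN : Integrable fun k => |g k| * omg l1 l2 k ^ (N + 2)) (i : Fin 3) :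
    ∫ p, |weightedRate l1 l2 N i f p - weightedRate l1 l2 N i g p| ∂(volume.prod volume) ≤
      weightConst l1 l2 N * (|M0 f - M0 g| / (M0 f * M0 g)) *
        (6 * (wnorm l1 l2 N f * wnorm l1 l2 (N + 2) f))
      + weightConst l1 l2 N * (1 / M0 g) *
        (6 * (wnorm l1 l2 N (fun k => f k - g k) *
          (wnorm l1 l2 (N + 2) f + wnorm l1 l2 (N + 2) g))) := by
  have hf_low := integrable_abs_mul_rpow_omg hl1 hl2 hf hfN
  have hg_low := integrable_abs_mul_rpow_omg hl1 hl2 hg hgN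
  have hfg_low := integrable_abs_sub_mul_rpow_omg hl1 hl2.le hf hg hf_low hg_low
  have hsum : Integrable fun k => (|f k| + |g k|) * omg l1 l2 k ^ (N + 2) := by
    simpa only [add_mul] using hfN.fun_add hgN
  have hsum_eq : ∫ k, (|f k| + |g k|) * omg l1 l2 k ^ (N + 2)
      = wnorm l1 l2 (N + 2) f + wnorm l1 l2 (N + 2) g := by
    simpa only [add_mul, wnorm] using integral_add hfN hgN
  have hkernel := (integrable_pairSum_triad hf_low hfN).const_mul
    (weightConst l1 l2 N * (|M0 f - M0 g| / (M0 f * M0 g)))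
  have hbalance := (integrable_pairSum_triad hfg_low hsum).const_mul
    (weightConst l1 l2 N * (1 / M0 g))
  refine (integral_mono ((integrable_weightedRate hl1 hl2 hN hf_pos hf hfN i).sub
    (integrable_weightedRate hl1 hl2 hN hg_pos hg hgN i)).abs (hkernel.fun_add hbalance)
    (abs_weightedRate_sub_le hl1 hl2 hN hf_pos hg_pos i)).trans_eq ?_
  rw [integral_add hkernel hbalance, integral_const_mul, integral_const_mul,
    integral_pairSum_triad hf_low hfN, integral_pairSum_triad hfg_low hsum, hsum_eq]
  rfl

end WeightedRate

section CollisionOperator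

variable {d : ℕ} {l1 l2 N M M' : ℝ} {f g : Sp d → ℝ}

/-- The class `V_M`: integrable functions whose `L¹_{N+2}` norm is at most `M` and whose mass is at
least `M'`. The mass is `∫ f`, which for a nonnegative `f` is its `L¹` norm. -/
structure MomentClass (l1 l2 N M M' : ℝ) (f : Sp d → ℝ) : Prop where
  integrable : Integrable f
  integrable_weighted : Integrable fun k => |f k| * omg l1 l2 k ^ (N + 2)
  wnorm_le : wnorm l1 l2 (N + 2) f ≤ M
  le_M0 : M' ≤ M0 f

/-- The Lipschitz constant in `L¹_N`, on the class `V_M`, of the contribution of each single member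
of the triads to the collision operator. -/
def triadLipConst (l1 l2 N M M' : ℝ) : ℝ :=
  weightConst l1 l2 N * (6 * (M / l1 * M) / (√l1 ^ N * M' ^ 2) + 12 * M / M')

lemma triadLipConst_pos (hl1 : 0 < l1) (hl2 : 0 < l2) (hM : 0 < M) (hM' : 0 < M') :
    0 < triadLipConst l1 l2 N M M' := by
  have := weightConst_pos (N := N) hl1 hl2
  unfold triadLipConst; positivity

namespace MomentClass

lemma integrable_abs_sub (hl1 : 0 < l1) (hl2 : 0 < l2) (hf : MomentClass l1 l2 N M M' f)
    (hg : MomentClass l1 l2 N M M' g) :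
    Integrable fun k => |f k - g k| * omg l1 l2 k ^ (N + 2) :=
  integrable_abs_sub_mul_rpow_omg hl1 hl2.le hf.integrable hg.integrable hf.integrable_weighted
    hg.integrable_weighted

lemma integral_abs_weightedRate_sub_le_mul_wnorm (hl1 : 0 < l1) (hl2 : 0 < l2) (hN : 0 ≤ N)
    (hM' : 0 < M') (hf : MomentClass l1 l2 N M M' f) (hg : MomentClass l1 l2 N M M' g)
    (i : Fin 3) :
    ∫ p, |weightedRate l1 l2 N i f p - weightedRate l1 l2 N i g p| ∂(volume.prod volume) ≤
      triadLipConst l1 l2 N M M' * wnorm l1 l2 N (fun k => f k - g k) := by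
  have hM0 := abs_M0_sub_le hl1 hl2.le hN hf.integrable hg.integrable
    (integrable_abs_mul_rpow_omg hl1 hl2 (hf.integrable.sub hg.integrable)
      (hf.integrable_abs_sub hl1 hl2 hg))
  have hf_low : wnorm l1 l2 N f ≤ M / l1 :=
    (wnorm_le_wnorm_add_two_div hl1 hl2 hf.integrable hf.integrable_weighted).trans
      (by gcongr; exact hf.wnorm_le)
  have hf_pos := hM'.trans_le hf.le_M0
  have hg_pos := hM'.trans_le hg.le_M0
  refine (integral_abs_weightedRate_sub_le hl1 hl2 hN hf_pos hg_pos hf.integrable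
    hg.integrable hf.integrable_weighted hg.integrable_weighted i).trans ?_
  set W := wnorm l1 l2 N fun k => f k - g k
  have hA := (weightConst_pos (N := N) hl1 hl2).le
  have hW : 0 ≤ W := wnorm_nonneg hl1 hl2.le _
  have hf_low_nonneg : 0 ≤ wnorm l1 l2 N f := wnorm_nonneg hl1 hl2.le f
  have hf_nonneg : 0 ≤ wnorm l1 l2 (N + 2) f := wnorm_nonneg hl1 hl2.le f
  have hg_nonneg : 0 ≤ wnorm l1 l2 (N + 2) g := wnorm_nonneg hl1 hl2.le g
  have hM : 0 ≤ M := hf_nonneg.trans hf.wnorm_le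
  calc weightConst l1 l2 N * (|M0 f - M0 g| / (M0 f * M0 g)) *
          (6 * (wnorm l1 l2 N f * wnorm l1 l2 (N + 2) f))
        + weightConst l1 l2 N * (1 / M0 g) *
          (6 * (W * (wnorm l1 l2 (N + 2) f + wnorm l1 l2 (N + 2) g)))
      ≤ weightConst l1 l2 N * (W / √l1 ^ N / (M' * M')) * (6 * (M / l1 * M))
        + weightConst l1 l2 N * (1 / M') * (6 * (W * (M + M))) := by
        gcongr
        exacts [hf.le_M0, hg.le_M0, hf.wnorm_le, hg.le_M0, hf.wnorm_le, hg.wnorm_le]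
    _ = triadLipConst l1 l2 N M M' * W := by
        rw [triadLipConst]; field

end MomentClass

/-- The first half of the collision operator, in which `k` is the member `b + e` of the triad,
multiplied by `ω_k^N`. -/
def outgoingPart (l1 l2 N : ℝ) (f : Sp d → ℝ) (k : Sp d) : ℝ :=
  ∫ y, weightedRate l1 l2 N 0 f (y, k - y)

/-- The second half of the collision operator, in which `k` is the member `b` of the triad,
multiplied by `ω_k^N`. -/
def incomingPart (l1 l2 N : ℝ) (f : Sp d → ℝ) (k : Sp d) : ℝ :=
  ∫ y, weightedRate l1 l2 N 1 f (k, y)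

lemma Qop_mul_rpow_omg (f : Sp d → ℝ) (k : Sp d) :
    Qop l1 l2 f k * omg l1 l2 k ^ N
      = outgoingPart l1 l2 N f k - 2 * incomingPart l1 l2 N f k := by
  simp only [outgoingPart, incomingPart, weightedRate, triad, Matrix.cons_val, add_sub_cancel,
    integral_const_mul, Qop, triadRate, triadKernel, triadBalance, mul_comm (f (k + _)) (f k)]
  ring

namespace MomentClass

protected lemma integrable_weightedRate (hl1 : 0 < l1) (hl2 : 0 < l2) (hN : 0 ≤ N) (hM' : 0 < M')
    (hf : MomentClass l1 l2 N M M' f) (i : Fin 3) :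
    Integrable (weightedRate l1 l2 N i f) (volume.prod volume) :=
  integrable_weightedRate hl1 hl2 hN (hM'.trans_le hf.le_M0) hf.integrable
    hf.integrable_weighted i

lemma integrable_outgoingPart (hl1 : 0 < l1) (hl2 : 0 < l2) (hN : 0 ≤ N) (hM' : 0 < M')
    (hf : MomentClass l1 l2 N M M' f) : Integrable (outgoingPart l1 l2 N f) :=
  ((measurePreserving_prod_sub_swap volume volume).integrable_comp_of_integrable
    (hf.integrable_weightedRate hl1 hl2 hN hM' 0)).integral_prod_left

lemma integrable_incomingPart (hl1 : 0 < l1) (hl2 : 0 < l2) (hN : 0 ≤ N) (hM' : 0 < M')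
    (hf : MomentClass l1 l2 N M M' f) : Integrable (incomingPart l1 l2 N f) :=
  (hf.integrable_weightedRate hl1 hl2 hN hM' 1).integral_prod_left

lemma integrable_Qop (hl1 : 0 < l1) (hl2 : 0 < l2) (hN : 0 ≤ N) (hM' : 0 < M')
    (hf : MomentClass l1 l2 N M M' f) : Integrable fun k => Qop l1 l2 f k * omg l1 l2 k ^ N := by
  simp only [Qop_mul_rpow_omg]
  exact (hf.integrable_outgoingPart hl1 hl2 hN hM').sub
    ((hf.integrable_incomingPart hl1 hl2 hN hM').const_mul 2)

lemma integral_abs_outgoingPart_sub_le (hl1 : 0 < l1) (hl2 : 0 < l2) (hN : 0 ≤ N) (hM' : 0 < M')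
    (hf : MomentClass l1 l2 N M M' f) (hg : MomentClass l1 l2 N M M' g) :
    ∫ k, |outgoingPart l1 l2 N f k - outgoingPart l1 l2 N g k| ≤
      triadLipConst l1 l2 N M M' * wnorm l1 l2 N (fun k => f k - g k) :=
  (integral_abs_integral_comp_sub_le (measurePreserving_prod_sub_swap volume volume)
    (hf.integrable_weightedRate hl1 hl2 hN hM' 0)
    (hg.integrable_weightedRate hl1 hl2 hN hM' 0)).trans
    (hf.integral_abs_weightedRate_sub_le_mul_wnorm hl1 hl2 hN hM' hg 0)

lemma integral_abs_incomingPart_sub_le (hl1 : 0 < l1) (hl2 : 0 < l2) (hN : 0 ≤ N) (hM' : 0 < M')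
    (hf : MomentClass l1 l2 N M M' f) (hg : MomentClass l1 l2 N M M' g) :
    ∫ k, |incomingPart l1 l2 N f k - incomingPart l1 l2 N g k| ≤
      triadLipConst l1 l2 N M M' * wnorm l1 l2 N (fun k => f k - g k) :=
  (integral_abs_integral_comp_sub_le (.id _) (hf.integrable_weightedRate hl1 hl2 hN hM' 1)
    (hg.integrable_weightedRate hl1 hl2 hN hM' 1)).trans
    (hf.integral_abs_weightedRate_sub_le_mul_wnorm hl1 hl2 hN hM' hg 1)

lemma wnorm_Qop_sub_le (hl1 : 0 < l1) (hl2 : 0 < l2) (hN : 0 ≤ N) (hM' : 0 < M')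
    (hf : MomentClass l1 l2 N M M' f) (hg : MomentClass l1 l2 N M M' g) :
    wnorm l1 l2 N (fun k => Qop l1 l2 f k - Qop l1 l2 g k) ≤
      3 * triadLipConst l1 l2 N M M' * wnorm l1 l2 N (fun k => f k - g k) := by
  have hout : Integrable fun k => |outgoingPart l1 l2 N f k - outgoingPart l1 l2 N g k| :=
    ((hf.integrable_outgoingPart hl1 hl2 hN hM').sub
      (hg.integrable_outgoingPart hl1 hl2 hN hM')).abs
  have hin : Integrable fun k => 2 * |incomingPart l1 l2 N f k - incomingPart l1 l2 N g k| :=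
    ((hf.integrable_incomingPart hl1 hl2 hN hM').sub
      (hg.integrable_incomingPart hl1 hl2 hN hM')).abs.const_mul 2
  have hsplit (k : Sp d) : |Qop l1 l2 f k - Qop l1 l2 g k| * omg l1 l2 k ^ N ≤
      |outgoingPart l1 l2 N f k - outgoingPart l1 l2 N g k|
        + 2 * |incomingPart l1 l2 N f k - incomingPart l1 l2 N g k| :=
    calc |Qop l1 l2 f k - Qop l1 l2 g k| * omg l1 l2 k ^ N
        = |(outgoingPart l1 l2 N f k - outgoingPart l1 l2 N g k)
            - 2 * (incomingPart l1 l2 N f k - incomingPart l1 l2 N g k)| := by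
          rw [← abs_mul_rpow_omg hl1 hl2.le, sub_mul, Qop_mul_rpow_omg, Qop_mul_rpow_omg]
          ring_nf
      _ ≤ _ := (abs_sub _ _).trans_eq (by rw [abs_mul, abs_two])
  calc wnorm l1 l2 N (fun k => Qop l1 l2 f k - Qop l1 l2 g k)
      ≤ ∫ k, (|outgoingPart l1 l2 N f k - outgoingPart l1 l2 N g k|
          + 2 * |incomingPart l1 l2 N f k - incomingPart l1 l2 N g k|) :=
        integral_mono_of_nonneg (.of_forall fun k => mul_nonneg (abs_nonneg _)
          (rpow_omg_pos hl1 hl2.le N k).le) (hout.fun_add hin) (.of_forall hsplit)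
    _ ≤ 3 * triadLipConst l1 l2 N M M' * wnorm l1 l2 N (fun k => f k - g k) := by
        rw [integral_add hout hin, integral_const_mul]
        linarith [hf.integral_abs_outgoingPart_sub_le hl1 hl2 hN hM' hg,
          hf.integral_abs_incomingPart_sub_le hl1 hl2 hN hM' hg]

end MomentClass

end CollisionOperator

section OneSidedLipschitz

open scoped Topology

variable {d : ℕ} {l1 l2 ν N M M' L : ℝ} {f g φ ψ : Sp d → ℝ}

/-- `L` is the bracket `[φ, ψ]` with respect to the `L¹_N` norm, the left derivative at `h = 0` of
`‖ψ + h φ‖`. It is a predicate on `L` because the limit need not exist. -/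
def HasBracket (l1 l2 N : ℝ) {d : ℕ} (φ ψ : Sp d → ℝ) (L : ℝ) : Prop :=
  Tendsto (fun h : ℝ => (wnorm l1 l2 N (fun k => ψ k + h * φ k) - wnorm l1 l2 N ψ) / h)
    (𝓝[<] 0) (𝓝 L)

lemma sign_mul_rpow_omg (hl1 : 0 < l1) (hl2 : 0 ≤ l2) (N a : ℝ) (k : Sp d) :
    Real.sign (a * omg l1 l2 k ^ N) = Real.sign a := by
  have hω := rpow_omg_pos hl1 hl2 N k
  rcases lt_trichotomy a 0 with ha | rfl | ha
  · rw [Real.sign_of_neg ha, Real.sign_of_neg (mul_neg_of_neg_of_pos ha hω)]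
  · rw [zero_mul]
  · rw [Real.sign_of_pos ha, Real.sign_of_pos (mul_pos ha hω)]

lemma HasBracket.le_integral_mul_sign (hl1 : 0 < l1) (hl2 : 0 ≤ l2)
    (hφ : Integrable fun k => |φ k| * omg l1 l2 k ^ N)
    (hψ : Integrable fun k => |ψ k| * omg l1 l2 k ^ N) (hL : HasBracket l1 l2 N φ ψ L) :
    L ≤ ∫ k, φ k * Real.sign (ψ k) * omg l1 l2 k ^ N := by
  simp only [HasBracket, wnorm, ← abs_mul_rpow_omg hl1 hl2, add_mul, mul_assoc] at hφ hψ hL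
  simpa only [sign_mul_rpow_omg hl1 hl2, mul_right_comm] using
    bracket_le_integral_mul_sign hφ hψ hL

lemma Qt_sub_mul_sign_le (hν : 0 ≤ ν) (f g : Sp d → ℝ) (k : Sp d) :
    (Qt l1 l2 ν f k - Qt l1 l2 ν g k) * Real.sign (f k - g k) ≤
      |Qop l1 l2 f k - Qop l1 l2 g k| := by
  have hdamping : 0 ≤ 2 * ν * ‖k‖ ^ 2 * (Real.sign (f k - g k) * (f k - g k)) :=
    mul_nonneg (by positivity) (Real.sign_mul_nonneg _)
  have hcollision : (Qop l1 l2 f k - Qop l1 l2 g k) * Real.sign (f k - g k) ≤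
      |Qop l1 l2 f k - Qop l1 l2 g k| :=
    (le_abs_self _).trans (abs_mul_sign_le _ _)
  calc (Qt l1 l2 ν f k - Qt l1 l2 ν g k) * Real.sign (f k - g k)
      = (Qop l1 l2 f k - Qop l1 l2 g k) * Real.sign (f k - g k)
          - 2 * ν * ‖k‖ ^ 2 * (Real.sign (f k - g k) * (f k - g k)) := by unfold Qt; ring
    _ ≤ |Qop l1 l2 f k - Qop l1 l2 g k| := by linarith

namespace MomentClass

lemma integrable_Qt (hl1 : 0 < l1) (hl2 : 0 < l2) (hN : 0 ≤ N) (hM' : 0 < M')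
    (hf : MomentClass l1 l2 N M M' f) : Integrable fun k => Qt l1 l2 ν f k * omg l1 l2 k ^ N := by
  have hQop := hf.integrable_Qop hl1 hl2 hN hM'
  have hdamping := (integrable_norm_sq_mul_rpow_omg hl1 hl2 hf.integrable
    hf.integrable_weighted).const_mul (2 * ν)
  refine (hQop.sub hdamping).congr (.of_forall fun k => ?_)
  simp only [Pi.sub_apply, Qt]
  ring

lemma bracket_Qt_sub_le (hl1 : 0 < l1) (hl2 : 0 < l2) (hN : 0 ≤ N) (hM' : 0 < M') (hν : 0 ≤ ν)
    (hf : MomentClass l1 l2 N M M' f) (hg : MomentClass l1 l2 N M M' g)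
    (hL : HasBracket l1 l2 N (fun k => Qt l1 l2 ν f k - Qt l1 l2 ν g k) (fun k => f k - g k) L) :
    L ≤ 3 * triadLipConst l1 l2 N M M' * wnorm l1 l2 N (fun k => f k - g k) := by
  have hQop : Integrable fun k => |Qop l1 l2 f k - Qop l1 l2 g k| * omg l1 l2 k ^ N := by
    simpa only [Pi.sub_apply, ← sub_mul, abs_mul_rpow_omg hl1 hl2.le] using
      ((hf.integrable_Qop hl1 hl2 hN hM').sub (hg.integrable_Qop hl1 hl2 hN hM')).abs
  have hQt : Integrable fun k => (Qt l1 l2 ν f k - Qt l1 l2 ν g k) * omg l1 l2 k ^ N := by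
    simp only [sub_mul]
    exact (hf.integrable_Qt hl1 hl2 hN hM').sub (hg.integrable_Qt hl1 hl2 hN hM')
  have hfg : Integrable fun k => (f k - g k) * omg l1 l2 k ^ N :=
    integrable_mul_rpow_omg hl1 hl2 (hf.integrable.sub hg.integrable)
      (hf.integrable_abs_sub hl1 hl2 hg)
  have hsign : Integrable fun k =>
      (Qt l1 l2 ν f k - Qt l1 l2 ν g k) * Real.sign (f k - g k) * omg l1 l2 k ^ N := by
    simpa only [sign_mul_rpow_omg hl1 hl2.le, mul_right_comm] using
      integrable_mul_sign one_ne_zero hQt.abs hfg.abs (hfg.add (hQt.const_mul 1)).abs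
  calc L ≤ ∫ k, (Qt l1 l2 ν f k - Qt l1 l2 ν g k) * Real.sign (f k - g k) * omg l1 l2 k ^ N :=
        hL.le_integral_mul_sign hl1 hl2.le
          (by simpa only [abs_mul_rpow_omg hl1 hl2.le] using hQt.abs)
          (by simpa only [abs_mul_rpow_omg hl1 hl2.le] using hfg.abs)
    _ ≤ wnorm l1 l2 N (fun k => Qop l1 l2 f k - Qop l1 l2 g k) :=
        integral_mono hsign hQop fun k =>
          mul_le_mul_of_nonneg_right (Qt_sub_mul_sign_le hν f g k) (rpow_omg_pos hl1 hl2.le N k).le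
    _ ≤ 3 * triadLipConst l1 l2 N M M' * wnorm l1 l2 N (fun k => f k - g k) :=
        hf.wnorm_Qop_sub_le hl1 hl2 hN hM' hg

end MomentClass

end OneSidedLipschitz

theorem one_sided_lipschitz_general {d : ℕ} (l1 l2 N M M' : ℝ) (hl1 : 0 < l1) (hl2 : 0 < l2)
    (hN : 0 ≤ N) (hM : 0 < M) (hM' : 0 < M') :
    (∀ φ ψ : Sp d → ℝ,
      Integrable (fun k => |φ k| * omg l1 l2 k ^ N) →
      Integrable (fun k => |ψ k| * omg l1 l2 k ^ N) →
      ∀ L : ℝ, HasBracket l1 l2 N φ ψ L →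
        L ≤ ∫ k, φ k * Real.sign (ψ k) * omg l1 l2 k ^ N) ∧
    ∃ C > (0 : ℝ), ∀ ν ≥ (0 : ℝ), ∀ f g : Sp d → ℝ,
      MomentClass l1 l2 N M M' f → MomentClass l1 l2 N M M' g →
      ∀ L : ℝ,
        HasBracket l1 l2 N (fun k => Qt l1 l2 ν f k - Qt l1 l2 ν g k) (fun k => f k - g k) L →
        L ≤ C * wnorm l1 l2 N (fun k => f k - g k) :=
  ⟨fun _ _ hφ hψ _ hL => hL.le_integral_mul_sign hl1 hl2.le hφ hψ,
    3 * triadLipConst l1 l2 N M M', mul_pos three_pos (triadLipConst_pos hl1 hl2 hM hM'),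
    fun _ hν _ _ hf hg _ hL => hf.bracket_Qt_sub_le hl1 hl2 hN hM' hν hg hL⟩

/-- One-sided Lipschitz property of the damped collision operator, where the
bracket [φ,ψ] = lim_{h→0⁻} h⁻¹(‖ψ + hφ‖_{L¹_N} − ‖ψ‖_{L¹_N}): (i) whenever the bracket
limit exists it is dominated by ∫ φ·sign(ψ)·ω^N; (ii) there is C_N > 0 such that for all
f, g in the class V_M, [Q̃[f] − Q̃[g], f − g] ≤ C_N·‖f − g‖_{L¹_N}. -/
theorem one_sided_lipschitz {d : ℕ} (hd : 2 ≤ d) (l1 l2 N ν M M' : ℝ)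
    (hl1 : 0 < l1) (hl2 : 0 < l2) (hN : 0 ≤ N) (hν : 0 < ν) (hM : 0 < M) (hM' : 0 < M') :
    (∀ φ ψ : Sp d → ℝ,
      Integrable (fun k => |φ k| * omg l1 l2 k ^ N) →
      Integrable (fun k => |ψ k| * omg l1 l2 k ^ N) →
      ∀ L : ℝ,
        Filter.Tendsto
          (fun h : ℝ =>
            (wnorm l1 l2 N (fun k => ψ k + h * φ k) - wnorm l1 l2 N ψ) / h)
          (nhdsWithin 0 (Set.Iio 0)) (nhds L) →
        L ≤ ∫ k, φ k * Real.sign (ψ k) * omg l1 l2 k ^ N) ∧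
    ∃ C > (0 : ℝ), ∀ f g : Sp d → ℝ,
      (∀ k, 0 ≤ f k) → (∀ k, 0 ≤ g k) →
      Integrable f → Integrable g →
      Integrable (fun k => |f k| * omg l1 l2 k ^ (N + 2)) →
      Integrable (fun k => |g k| * omg l1 l2 k ^ (N + 2)) →
      wnorm l1 l2 (N + 2) f ≤ M → wnorm l1 l2 (N + 2) g ≤ M →
      M' ≤ ∫ k, |f k| → M' ≤ ∫ k, |g k| →
      ∀ L : ℝ,
        Filter.Tendsto
          (fun h : ℝ =>
            (wnorm l1 l2 N (fun k => (f k - g k) + h * (Qt l1 l2 ν f k - Qt l1 l2 ν g k)) -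
              wnorm l1 l2 N (fun k => f k - g k)) / h)
          (nhdsWithin 0 (Set.Iio 0)) (nhds L) →
        L ≤ C * wnorm l1 l2 N (fun k => f k - g k) := by
  obtain ⟨hbracket, C, hC, hLip⟩ :=
    one_sided_lipschitz_general (d := d) l1 l2 N M M' hl1 hl2 hN hM hM'
  refine ⟨hbracket, C, hC, fun f g hf hg hfi hgi hfN hgN hfM hgM hfM' hgM' =>
    hLip ν hν.le f g ⟨hfi, hfN, hfM, ?_⟩ ⟨hgi, hgN, hgM, ?_⟩⟩
  · simpa only [M0, abs_of_nonneg (hf _)] using hfM'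
  · simpa only [M0, abs_of_nonneg (hg _)] using hgM'
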